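/- For all positive integers α, m, n, r, the congruence ∑_{k=0}^{n-1} [k(k+2)]^r · [2(k+1)] · q^{(n-2-k)(2αm+1)} · (w_k^{(α)}(x;q)·w_{k+1}^{(α)}(x;q))^m ≡ 0 (mod [n]) holds in ℤ[q][x]. -/

import Mathlib

open Polynomial LaurentPolynomial

/-- The Gaussian binomial coefficient as a polynomial in `q` over `ℤ`. -/
noncomputable def qbinom : ℕ → ℕ → Polynomial ℤ
  | _, 0 => 1
  | 0, _ + 1 => 0
  | n + 1, k + 1 => qbinom n k + Polynomial.X ^ (k + 1) * qbinom n (k + 1)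

/-- The `q`-integer `[m] = 1 + q + ⋯ + q^{m-1}` in `ℤ[q]`. -/
noncomputable def qint (m : ℕ) : Polynomial ℤ := ∑ i ∈ Finset.range m, Polynomial.X ^ i

/-- The `q`-integer `[m]` as a Laurent polynomial in `q`. -/
noncomputable def qintL (m : ℕ) : LaurentPolynomial ℤ := (qint m).toLaurent

/-- `qbinom(k-1,j-1)·qbinom(k+j,j) − qbinom(k,j)·qbinom(k+j,j-1)`. -/
noncomputable def qwCoeff (k j : ℕ) : Polynomial ℤ :=
  qbinom (k - 1) (j - 1) * qbinom (k + j) j - qbinom k j * qbinom (k + j) (j - 1)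

/-- `w_k^{(α)}(x;q) = ∑_{j=1}^{k} q^{α(C(j+1,2)−(k+1)(j−1))} ·
(qbinom(k-1,j-1)·qbinom(k+j,j) − qbinom(k,j)·qbinom(k+j,j-1))^α · x^{j-1}`,
a polynomial in `x` with coefficients in `ℤ[q,q⁻¹]` (the exponent of `q` may be negative). -/
noncomputable def qw (α k : ℕ) : Polynomial (LaurentPolynomial ℤ) :=
  ∑ j ∈ Finset.Icc 1 k,
    Polynomial.C (LaurentPolynomial.T ((α : ℤ) * (((j + 1).choose 2 : ℤ) - ((k : ℤ) + 1) * ((j : ℤ) - 1))) *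
        ((qwCoeff k j).toLaurent) ^ α) *
      Polynomial.X ^ (j - 1)

/-- The Gaussian binomial coefficient evaluated at an element of a commutative ring. -/
noncomputable def qbinomAt {K : Type*} [CommRing K] (q : K) (n k : ℕ) : K :=
  (qbinom n k).eval₂ (Int.castRingHom K) q

section Recurrences

variable {K : Type*} [CommRing K] (q : K)

lemma qbinomAt_zero_right (n : ℕ) : qbinomAt q n 0 = 1 := by
  cases n <;> simp [qbinomAt, qbinom]

lemma qbinomAt_zero_succ (k : ℕ) : qbinomAt q 0 (k + 1) = 0 := by
  simp [qbinomAt, qbinom]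

lemma qbinomAt_succ_succ (n k : ℕ) :
    qbinomAt q (n + 1) (k + 1) = qbinomAt q n k + q ^ (k + 1) * qbinomAt q n (k + 1) := by
  simp [qbinomAt, qbinom, Polynomial.eval₂_add, Polynomial.eval₂_mul]

lemma qbinomAt_eq_zero_of_lt {n k : ℕ} (h : n < k) : qbinomAt q n k = 0 := by
  induction n generalizing k with
  | zero =>
    obtain ⟨k, rfl⟩ := Nat.exists_eq_succ_of_ne_zero h.ne'
    exact qbinomAt_zero_succ q k
  | succ n ih =>
    obtain ⟨k, rfl⟩ := Nat.exists_eq_succ_of_ne_zero (Nat.ne_zero_of_lt h)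
    rw [Nat.succ_eq_add_one, qbinomAt_succ_succ, ih (by omega), ih (by omega)]
    ring

lemma qbinomAt_self (n : ℕ) : qbinomAt q n n = 1 := by
  induction n with
  | zero => exact qbinomAt_zero_right q 0
  | succ n ih =>
    rw [qbinomAt_succ_succ, ih, qbinomAt_eq_zero_of_lt q (Nat.lt_succ_self n)]
    ring

lemma pow_mul_one_sub_mul_qbinomAt_succ (n k : ℕ) :
    q ^ k * (1 - q ^ (k + 1)) * qbinomAt q n (k + 1) = (q ^ k - q ^ n) * qbinomAt q n k := by
  induction n generalizing k with
  | zero =>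
    cases k with
    | zero => simp [qbinomAt_zero_succ]
    | succ k => simp [qbinomAt_zero_succ]
  | succ n ih =>
    cases k with
    | zero =>
      rw [qbinomAt_succ_succ]
      have h := ih 0
      simp only [qbinomAt_zero_right] at h ⊢
      linear_combination q * h
    | succ k =>
      rw [qbinomAt_succ_succ, qbinomAt_succ_succ]
      have h₁ := ih k
      have h₂ := ih (k + 1)
      linear_combination q ^ (k + 2) * h₂ + q * h₁

lemma one_sub_mul_qbinomAt_succ_succ (n k : ℕ) :
    (1 - q ^ (k + 1)) * qbinomAt q (n + 1) (k + 1) = (1 - q ^ (n + 1)) * qbinomAt q n k := by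
  rw [qbinomAt_succ_succ]
  linear_combination q * pow_mul_one_sub_mul_qbinomAt_succ q n k

end Recurrences

/-- `qwCoeff` evaluated at an element of a commutative ring. -/
noncomputable def qwCoeffAt {K : Type*} [CommRing K] (q : K) (k j : ℕ) : K :=
  (qwCoeff k j).eval₂ (Int.castRingHom K) q

lemma qwCoeffAt_eq {K : Type*} [CommRing K] (q : K) (k j : ℕ) :
    qwCoeffAt q k j = qbinomAt q (k - 1) (j - 1) * qbinomAt q (k + j) j -
      qbinomAt q k j * qbinomAt q (k + j) (j - 1) := by
  simp [qwCoeffAt, qwCoeff, qbinomAt, Polynomial.eval₂_sub, Polynomial.eval₂_mul]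

lemma qwCoeffAt_eq_zero_of_lt {K : Type*} [CommRing K] (q : K) {k j : ℕ} (hk : 1 ≤ k)
    (h : k < j) : qwCoeffAt q k j = 0 := by
  rw [qwCoeffAt_eq, qbinomAt_eq_zero_of_lt q h, qbinomAt_eq_zero_of_lt q (by omega)]
  ring

section Field

variable {K : Type*} [Field K] {q : K}

lemma one_sub_mul_qwCoeffAt (hq : q ≠ 0) (k e : ℕ) :
    (1 - q ^ (e + 1)) * qwCoeffAt q (k + 1) (e + 1) =
      (q ^ (k + 1) - q ^ (k + 2)) * (qbinomAt q k e * qbinomAt q (k + e + 2) e) := by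
  rw [qwCoeffAt_eq]
  have h₁ : (1 - q ^ (e + 1)) * qbinomAt q (k + e + 2) (e + 1) =
      (1 - q ^ (k + 2)) * qbinomAt q (k + e + 2) e := by
    apply mul_left_cancel₀ (pow_ne_zero e hq)
    linear_combination pow_mul_one_sub_mul_qbinomAt_succ q (k + e + 2) e
  have h₂ := one_sub_mul_qbinomAt_succ_succ q k e
  rw [show k + 1 + (e + 1) = k + e + 2 by ring]
  simp only [Nat.add_sub_cancel]
  linear_combination qbinomAt q k e * h₁ - qbinomAt q (k + e + 2) e * h₂

lemma qbinomAt_mul_qbinomAt_succ (k e : ℕ) :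
    q ^ (e + 1) * (1 - q ^ (e + 1)) ^ 2 *
        (qbinomAt q k (e + 1) * qbinomAt q (k + (e + 1) + 2) (e + 1)) =
      (q ^ (e + 1) - q ^ (k + 1)) * (1 - q ^ (k + e + 3)) *
        (qbinomAt q k e * qbinomAt q (k + e + 2) e) := by
  have h₁ := one_sub_mul_qbinomAt_succ_succ q (k + e + 2) e
  have h₂ := pow_mul_one_sub_mul_qbinomAt_succ q k e
  rw [show k + (e + 1) + 2 = k + e + 2 + 1 by ring]
  calc _ = q * (q ^ e * (1 - q ^ (e + 1)) * qbinomAt q k (e + 1)) *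
        ((1 - q ^ (e + 1)) * qbinomAt q (k + e + 2 + 1) (e + 1)) := by ring
    _ = _ := by rw [h₁, h₂]; ring

lemma IsPrimitiveRoot.one_sub_pow_ne_zero {d : ℕ} (h : IsPrimitiveRoot q d) {i : ℕ} (h0 : i ≠ 0)
    (hi : i < d) : 1 - q ^ i ≠ 0 :=
  sub_ne_zero.mpr (h.pow_ne_one_of_pos_of_lt h0 hi).symm

lemma qbinomAt_mul_qbinomAt_reflect {k k' d : ℕ} (h : IsPrimitiveRoot q d) (hd : k + k' + 3 = d)
    {e : ℕ} (he : e < d) :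
    (qbinomAt q k' e * qbinomAt q (k' + e + 2) e) * q ^ ((2 * k + 3) * e) =
      qbinomAt q k e * qbinomAt q (k + e + 2) e := by
  have hq : q ≠ 0 := h.ne_zero (by omega)
  induction e with
  | zero => simp [qbinomAt_zero_right]
  | succ e ih =>
    have ih := ih (by omega)
    have hne := h.one_sub_pow_ne_zero (Nat.succ_ne_zero e) he
    apply mul_left_cancel₀ (mul_ne_zero (pow_ne_zero (e + 1) hq) (pow_ne_zero 2 hne))
    have h₁ := qbinomAt_mul_qbinomAt_succ (q := q) k e
    have h₂ := qbinomAt_mul_qbinomAt_succ (q := q) k' e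
    have hone : q ^ k * q ^ k' * q ^ 3 = 1 := by
      rw [← pow_add, ← pow_add, hd, h.pow_eq_one]
    have hfac : (q ^ (e + 1) - q ^ (k' + 1)) * (1 - q ^ (k' + e + 3)) * q ^ (2 * k + 3) =
        (q ^ (e + 1) - q ^ (k + 1)) * (1 - q ^ (k + e + 3)) := by
      linear_combination (-(q ^ k * q) - q ^ 4 * q ^ k * (q ^ e) ^ 2 +
        (q ^ k * q ^ k' * q ^ 3 + 1) * q * q ^ e) * hone
    rw [Nat.succ_eq_add_one, h₁, ← ih, ← hfac]
    rw [show (2 * k + 3) * (e + 1) = (2 * k + 3) * e + (2 * k + 3) by ring, pow_add]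
    linear_combination q ^ ((2 * k + 3) * e) * q ^ (2 * k + 3) * h₂

lemma qwCoeffAt_reflect_of_lt {k k' d : ℕ} (h : IsPrimitiveRoot q d) (hd : k + k' + 3 = d)
    {e : ℕ} (he : e + 1 < d) :
    qwCoeffAt q (k' + 1) (e + 1) * q ^ ((2 * k + 3) * (e + 1)) =
      qwCoeffAt q (k + 1) (e + 1) := by
  have hq : q ≠ 0 := h.ne_zero (by omega)
  apply mul_left_cancel₀ (h.one_sub_pow_ne_zero (Nat.succ_ne_zero e) he)
  have hone : q ^ (k + k' + 3) = 1 := by rw [hd, h.pow_eq_one]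
  rw [Nat.succ_eq_add_one, one_sub_mul_qwCoeffAt hq, ← mul_assoc, one_sub_mul_qwCoeffAt hq,
    ← qbinomAt_mul_qbinomAt_reflect h hd (by omega : e < d)]
  linear_combination (q ^ (k + 1) - q ^ (k + 2)) * q ^ ((2 * k + 3) * e) *
    (qbinomAt q k' e * qbinomAt q (k' + e + 2) e) * hone

lemma qbinomAt_primitiveRoot_eq_zero {d : ℕ} (h : IsPrimitiveRoot q d) {k : ℕ} (h0 : k ≠ 0)
    (hk : k < d) : qbinomAt q d k = 0 := by
  have hq : q ≠ 0 := h.ne_zero (by omega)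
  obtain ⟨k, rfl⟩ := Nat.exists_eq_succ_of_ne_zero h0
  have key : q ^ k * (1 - q ^ (k + 1)) * qbinomAt q d (k + 1) = 0 := by
    clear h0
    induction k with
    | zero => rw [pow_mul_one_sub_mul_qbinomAt_succ, h.pow_eq_one]; simp
    | succ k ih =>
      have hz := (mul_eq_zero.mp (ih (by omega))).resolve_left (mul_ne_zero (pow_ne_zero k hq)
        (h.one_sub_pow_ne_zero (Nat.succ_ne_zero k) (by omega)))
      rw [pow_mul_one_sub_mul_qbinomAt_succ, hz, mul_zero]
  exact (mul_eq_zero.mp key).resolve_left (mul_ne_zero (pow_ne_zero k hq)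
    (h.one_sub_pow_ne_zero h0 hk))

lemma qbinomAt_add_primitiveRoot {d : ℕ} (hd : d ≠ 0) (h : IsPrimitiveRoot q d) (n k : ℕ) :
    qbinomAt q (n + d) k = qbinomAt q n k + if d ≤ k then qbinomAt q n (k - d) else 0 := by
  induction n generalizing k with
  | zero =>
    rw [zero_add]
    rcases k with _ | k
    · simp [qbinomAt_zero_right, hd]
    · rw [qbinomAt_zero_succ, zero_add]
      rcases lt_trichotomy (k + 1) d with hlt | heq | hgt
      · rw [qbinomAt_primitiveRoot_eq_zero h (Nat.succ_ne_zero k) hlt, if_neg (by omega)]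
      · rw [if_pos heq.ge, ← heq, qbinomAt_self, Nat.sub_self, qbinomAt_zero_right]
      · rw [if_pos hgt.le, qbinomAt_eq_zero_of_lt q hgt, qbinomAt_eq_zero_of_lt q (by omega)]
  | succ n ih =>
    rcases k with _ | k
    · simp [qbinomAt_zero_right, hd]
    · rw [show n + 1 + d = n + d + 1 by ring, qbinomAt_succ_succ, qbinomAt_succ_succ, ih, ih]
      rcases lt_trichotomy (k + 1) d with hlt | heq | hgt
      · simp [show ¬ d ≤ k by omega, show ¬ d ≤ k + 1 by omega]
      · rw [if_neg (by omega), if_pos heq.ge, if_pos heq.ge, heq, Nat.sub_self, h.pow_eq_one,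
          qbinomAt_zero_right, qbinomAt_zero_right]
        ring
      · obtain ⟨l, rfl⟩ : ∃ l, k = l + d := ⟨k - d, by omega⟩
        rw [if_pos (by omega), if_pos (by omega), if_pos (by omega),
          show l + d + 1 - d = l + 1 by omega, Nat.add_sub_cancel, qbinomAt_succ_succ,
          show l + d + 1 = l + 1 + d by ring, pow_add q (l + 1) d, h.pow_eq_one]
        ring

/-- The `q`-Lucas theorem at a primitive root of unity. -/
lemma qbinomAt_lucas {d : ℕ} (h : IsPrimitiveRoot q d) (A C : ℕ) {B E : ℕ}
    (hB : B < d) (hE : E < d) :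
    qbinomAt q (A * d + B) (C * d + E) = (A.choose C : K) * qbinomAt q B E := by
  have hd : d ≠ 0 := by omega
  induction A generalizing C with
  | zero =>
    rcases C with _ | C
    · simp
    · rw [qbinomAt_eq_zero_of_lt q (by nlinarith)]
      simp
  | succ A ih =>
    rw [show (A + 1) * d + B = A * d + B + d by ring, qbinomAt_add_primitiveRoot hd h]
    rcases C with _ | C
    · rw [ih, if_neg (by omega)]
      simp
    · rw [ih, if_pos (by nlinarith), show (C + 1) * d + E - d = C * d + E by
        rw [add_mul, one_mul]; omega, ih, Nat.choose_succ_succ]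
      push_cast
      ring

lemma qbinomAt_eq_zero_of_mod_lt {d : ℕ} (h : IsPrimitiveRoot q d) (A C : ℕ) {B E : ℕ}
    (hE : E < d) (hBE : B < E) : qbinomAt q (A * d + B) (C * d + E) = 0 := by
  rw [qbinomAt_lucas h A C (hBE.trans hE) hE, qbinomAt_eq_zero_of_lt q hBE, mul_zero]

lemma qwCoeffAt_mul_add {d : ℕ} (h : IsPrimitiveRoot q d) (a c : ℕ) {k e : ℕ}
    (hk : k + 2 < d) (he : e + 1 < d) :
    qwCoeffAt q (a * d + (k + 1)) (c * d + (e + 1)) =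
      (a.choose c * (a + c).choose c : K) * qwCoeffAt q (k + 1) (e + 1) := by
  rw [qwCoeffAt_eq, qwCoeffAt_eq]
  simp only [← add_assoc, Nat.add_sub_cancel]
  rw [add_assoc (c * d) e 1, add_assoc (a * d) k 1, qbinomAt_lucas h a c (by omega) (by omega),
    qbinomAt_lucas h a c (by omega) (by omega),
    show a * d + (k + 1) + c * d + e + 1 = (a + c) * d + (k + e + 2) by ring,
    show k + 1 + e + 1 = k + e + 2 by ring]
  rcases lt_or_ge (k + e + 2) d with hlt | hge
  · rw [qbinomAt_lucas h _ c hlt he, qbinomAt_lucas h _ c hlt (by omega)]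
    ring
  · obtain ⟨s, hs⟩ := Nat.exists_eq_add_of_le hge
    have h₁ (E : ℕ) (hE : E < d) (hsE : s < E) : qbinomAt q (k + e + 2) E = 0 := by
      simpa [hs] using qbinomAt_eq_zero_of_mod_lt h 1 0 hE hsE
    have h₂ (E : ℕ) (hE : E < d) (hsE : s < E) :
        qbinomAt q ((a + c) * d + (k + e + 2)) (c * d + E) = 0 := by
      rw [hs, ← add_assoc, ← Nat.succ_mul]
      exact qbinomAt_eq_zero_of_mod_lt h _ _ hE hsE
    rw [h₁ _ he (by omega), h₁ e (by omega) (by omega), h₂ _ he (by omega),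
      h₂ e (by omega) (by omega)]
    ring

lemma qwCoeffAt_mul_eq_zero {d : ℕ} (h : IsPrimitiveRoot q d) (a c : ℕ) {k : ℕ}
    (hk : k + 2 < d) : qwCoeffAt q (a * d + (k + 1)) (c * d + d) = 0 := by
  rw [qwCoeffAt_eq, show c * d + d - 1 = c * d + (d - 1) by omega, ← add_assoc,
    Nat.add_sub_cancel, qbinomAt_eq_zero_of_mod_lt h a c (by omega) (by omega : k < d - 1),
    show a * d + k + 1 + (c * d + d) = (a + c + 1) * d + (k + 1) by ring,
    qbinomAt_eq_zero_of_mod_lt h _ c (by omega) (by omega : k + 1 < d - 1)]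
  ring

lemma qwCoeffAt_reflect {k k' d : ℕ} (h : IsPrimitiveRoot q d) (hd : k + k' + 3 = d)
    (a j : ℕ) :
    qwCoeffAt q (a * d + (k' + 1)) (j + 1) * q ^ ((2 * k + 3) * (j + 1)) =
      qwCoeffAt q (a * d + (k + 1)) (j + 1) := by
  obtain ⟨c, e, he, rfl⟩ : ∃ c e, e < d ∧ j = c * d + e :=
    ⟨j / d, j % d, Nat.mod_lt _ (by omega), (Nat.div_add_mod' j d).symm⟩
  rcases (Nat.succ_le_of_lt he).lt_or_eq with hlt | rfl
  · rw [add_assoc, qwCoeffAt_mul_add h a c (by omega) hlt, qwCoeffAt_mul_add h a c (by omega) hlt,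
      ← qwCoeffAt_reflect_of_lt h hd hlt,
      show (2 * k + 3) * (c * d + (e + 1)) = d * ((2 * k + 3) * c) + (2 * k + 3) * (e + 1) by ring,
      pow_add q (d * _), pow_mul q d, h.pow_eq_one, one_pow]
    ring
  · rw [add_assoc, ← Nat.succ_eq_add_one e, qwCoeffAt_mul_eq_zero h a c (by omega),
      qwCoeffAt_mul_eq_zero h a c (by omega), zero_mul]

end Field

section Evaluation

variable {K : Type*} [Field K]

/-- Evaluation of integral Laurent polynomials at a unit. -/
noncomputable def laurentEval (z : Kˣ) : LaurentPolynomial ℤ →+* K :=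
  LaurentPolynomial.eval₂ (Int.castRingHom K) z

lemma laurentEval_T (z : Kˣ) (n : ℤ) : laurentEval z (LaurentPolynomial.T n) = (z : K) ^ n := by
  simp [laurentEval, LaurentPolynomial.eval₂_T]

lemma laurentEval_toLaurent (z : Kˣ) (p : Polynomial ℤ) :
    laurentEval z (Polynomial.toLaurent p) = p.eval₂ (Int.castRingHom K) z :=
  LaurentPolynomial.eval₂_toLaurent _ _ _

lemma one_sub_mul_laurentEval_qintL (z : Kˣ) (n : ℕ) :
    (1 - (z : K)) * laurentEval z (qintL n) = 1 - (z : K) ^ n := by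
  rw [qintL, laurentEval_toLaurent, qint, Polynomial.eval₂_finsetSum]
  simp only [Polynomial.eval₂_X_pow]
  exact mul_neg_geom_sum _ _

lemma coeff_map_qw (z : Kˣ) (α : ℕ) (hα : α ≠ 0) {k : ℕ} (hk : 1 ≤ k) (i : ℕ) :
    ((qw α k).map (laurentEval z)).coeff i =
      ((z : K) ^ (((i + 2).choose 2 : ℤ) - ((k : ℤ) + 1) * i) *
        qwCoeffAt (z : K) k (i + 1)) ^ α := by
  have hterm (j : ℕ) : laurentEval z (LaurentPolynomial.T
        ((α : ℤ) * (((j + 1 + 1).choose 2 : ℤ) - ((k : ℤ) + 1) * (((j + 1 : ℕ) : ℤ) - 1))) *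
        ((qwCoeff k (j + 1)).toLaurent) ^ α) =
      ((z : K) ^ (((j + 2).choose 2 : ℤ) - ((k : ℤ) + 1) * j) *
        qwCoeffAt (z : K) k (j + 1)) ^ α := by
    rw [map_mul, map_pow, laurentEval_T, laurentEval_toLaurent, mul_pow, mul_comm (α : ℤ),
      zpow_mul, zpow_natCast, qwCoeffAt, Nat.cast_succ, add_sub_cancel_right]
  rw [Polynomial.coeff_map, qw, Polynomial.finsetSum_coeff]
  simp only [Polynomial.coeff_C_mul_X_pow]
  by_cases hi : i < k
  · rw [Finset.sum_eq_single (i + 1), if_pos (by simp), hterm]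
    · intro j hj hne
      rw [Finset.mem_Icc] at hj
      rw [if_neg (by omega)]
    · intro hmem
      exact absurd (Finset.mem_Icc.mpr ⟨by omega, by omega⟩) hmem
  · rw [Finset.sum_eq_zero, map_zero, qwCoeffAt_eq_zero_of_lt _ hk (by omega), mul_zero,
      zero_pow hα]
    intro j hj
    rw [Finset.mem_Icc] at hj
    rw [if_neg (by omega)]

lemma map_qw_reflect {z : Kˣ} {d : ℕ} (h : IsPrimitiveRoot (z : K) d) {α : ℕ} (hα : α ≠ 0)
    {k k' : ℕ} (hd : k + k' + 3 = d) (a : ℕ) :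
    (qw α (a * d + (k' + 1))).map (laurentEval z) * Polynomial.C ((z : K) ^ ((2 * k + 3) * α)) =
      (qw α (a * d + (k + 1))).map (laurentEval z) := by
  ext i
  rw [Polynomial.coeff_mul_C, coeff_map_qw z α hα (by omega), coeff_map_qw z α hα (by omega),
    pow_mul, ← mul_pow, ← qwCoeffAt_reflect h hd a i]
  congr 1
  have hz : (z : K) ^ (-((d : ℤ) * i)) = 1 := by
    rw [zpow_neg, zpow_mul, zpow_natCast _ d, h.pow_eq_one, one_zpow, inv_one]
  have hexp : (z : K) ^ (((i + 2).choose 2 : ℤ) - (((a * d + (k' + 1) : ℕ) : ℤ) + 1) * i) =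
      (z : K) ^ (((i + 2).choose 2 : ℤ) - (((a * d + (k + 1) : ℕ) : ℤ) + 1) * i) *
        (z : K) ^ ((2 * k + 3) * i) := by
    rw [← zpow_natCast, ← zpow_add₀ z.ne_zero, ← mul_one ((z : K) ^ (_ + _)), ← hz,
      ← zpow_add₀ z.ne_zero, ← hd]
    congr 1
    push_cast
    ring
  rw [hexp]
  ring

lemma laurentEval_qintL_eq_zero {z : Kˣ} {d : ℕ} (h : IsPrimitiveRoot (z : K) d) (hd : 1 < d)
    {n : ℕ} (hn : d ∣ n) : laurentEval z (qintL n) = 0 := by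
  have hne : 1 - (z : K) ≠ 0 := sub_ne_zero.mpr (h.ne_one hd).symm
  apply (mul_eq_zero.mp _).resolve_left hne
  rw [one_sub_mul_laurentEval_qintL, (h.pow_eq_one_iff_dvd n).mpr hn, sub_self]

/-- The image of the coefficient of `(w_k w_{k+1})^m` in the sum under evaluation at `z`. -/
noncomputable def weightAt (z : Kˣ) (α m n r k : ℕ) : K :=
  laurentEval z (qintL (k * (k + 2))) ^ r * laurentEval z (qintL (2 * (k + 1))) *
    (z : K) ^ (((n : ℤ) - 2 - k) * (2 * α * m + 1))

lemma weightAt_eq_zero {z : Kˣ} {d : ℕ} (h : IsPrimitiveRoot (z : K) d) (hd : 1 < d)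
    {α m n r k : ℕ} (hr : r ≠ 0) (hk : d ∣ k ∨ d ∣ k + 1 ∨ d ∣ k + 2) :
    weightAt z α m n r k = 0 := by
  rw [weightAt]
  rcases hk with hk | hk | hk
  · rw [laurentEval_qintL_eq_zero h hd (hk.mul_right _), zero_pow hr]
    ring
  · rw [laurentEval_qintL_eq_zero h hd (hk.mul_left 2)]
    ring
  · rw [laurentEval_qintL_eq_zero h hd (hk.mul_left k), zero_pow hr]
    ring

lemma weightAt_reflect {z : Kˣ} {d : ℕ} (h : IsPrimitiveRoot (z : K) d) (hd : 1 < d)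
    (α m n r : ℕ) {k l M : ℕ} (hkl : k + l + 2 = M * d) :
    weightAt z α m n r l = -weightAt z α m n r k * (z : K) ^ (4 * (k + 1) * (α * m)) := by
  have hne : 1 - (z : K) ≠ 0 := sub_ne_zero.mpr (h.ne_one hd).symm
  have hmul (N : ℕ) : (z : K) ^ (M * d * N) = 1 := by
    rw [mul_right_comm, pow_mul', h.pow_eq_one, one_pow]
  have h₁ : laurentEval z (qintL (l * (l + 2))) = laurentEval z (qintL (k * (k + 2))) := by
    apply mul_left_cancel₀ hne
    rw [one_sub_mul_laurentEval_qintL, one_sub_mul_laurentEval_qintL,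
      ← mul_one ((z : K) ^ (l * _)), ← mul_one ((z : K) ^ (k * _)), ← hmul (k + 1),
      ← pow_add, hmul (k + 1), ← hmul (l + 1), ← pow_add, ← hkl]
    congr 2
    ring
  have h₂ : laurentEval z (qintL (2 * (l + 1))) * (z : K) ^ (2 * (k + 1)) =
      -laurentEval z (qintL (2 * (k + 1))) := by
    apply mul_left_cancel₀ hne
    rw [← mul_assoc, one_sub_mul_laurentEval_qintL, mul_neg, one_sub_mul_laurentEval_qintL,
      sub_mul, ← pow_add, show 2 * (l + 1) + 2 * (k + 1) = M * d * 2 by rw [← hkl]; ring, hmul]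
    ring
  have h₃ : (z : K) ^ (((n : ℤ) - 2 - l) * (2 * α * m + 1)) =
      (z : K) ^ (((n : ℤ) - 2 - k) * (2 * α * m + 1)) * (z : K) ^ (2 * (k + 1)) *
        (z : K) ^ (4 * (k + 1) * (α * m)) := by
    rw [← mul_one ((z : K) ^ (((n : ℤ) - 2 - l) * (2 * α * m + 1))),
      ← hmul (2 * α * m + 1), ← hkl, ← zpow_natCast, ← zpow_natCast, ← zpow_natCast,
      ← zpow_add₀ z.ne_zero, ← zpow_add₀ z.ne_zero, ← zpow_add₀ z.ne_zero]
    congr 1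
    push_cast
    ring
  rw [weightAt, weightAt, h₁, h₃]
  linear_combination laurentEval z (qintL (k * (k + 2))) ^ r *
    (z : K) ^ (((n : ℤ) - 2 - k) * (2 * α * m + 1)) * (z : K) ^ (4 * (k + 1) * (α * m)) * h₂

/-- The image of a summand of the sum under evaluation at `z`. -/
noncomputable def summandAt (z : Kˣ) (α m n r k : ℕ) : Polynomial K :=
  Polynomial.C (weightAt z α m n r k) *
    ((qw α k).map (laurentEval z) * (qw α (k + 1)).map (laurentEval z)) ^ m

lemma summandAt_eq_zero {z : Kˣ} {d : ℕ} (h : IsPrimitiveRoot (z : K) d) (hd : 1 < d)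
    {α m n r k : ℕ} (hr : r ≠ 0) (hk : d ∣ k ∨ d ∣ k + 1 ∨ d ∣ k + 2) :
    summandAt z α m n r k = 0 := by
  rw [summandAt, weightAt_eq_zero h hd hr hk, Polynomial.C_0, zero_mul]

lemma summandAt_reflect {z : Kˣ} {d : ℕ} (h : IsPrimitiveRoot (z : K) d) (hd : 1 < d)
    {α : ℕ} (m n : ℕ) {r : ℕ} (hα : α ≠ 0) (hr : r ≠ 0) (a : ℕ) {b b' : ℕ}
    (hb : b + b' + 2 = d) :
    summandAt z α m n r (a * d + b') = -summandAt z α m n r (a * d + b) := by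
  have hdvd : d ∣ a * d := Dvd.intro_left a rfl
  rcases b with _ | k
  · rw [add_zero, summandAt_eq_zero (k := a * d) h hd hr (Or.inl hdvd), neg_zero]
    apply summandAt_eq_zero h hd hr (Or.inr (Or.inr _))
    rw [add_assoc, show b' + 2 = d by omega]
    exact hdvd.add dvd_rfl
  rcases b' with _ | l
  · rw [add_zero, summandAt_eq_zero (k := a * d) h hd hr (Or.inl hdvd),
      summandAt_eq_zero h hd hr (Or.inr (Or.inr _)), neg_zero]
    rw [add_assoc, show k + 1 + 2 = d by omega]
    exact hdvd.add dvd_rfl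
  have h₁ := map_qw_reflect h hα (show k + 1 + l + 3 = d by omega) a
  have h₂ := map_qw_reflect h hα (show k + (l + 1) + 3 = d by omega) a
  have hper : (z : K) ^ (4 * (a * d + (k + 1) + 1) * (α * m)) =
      ((z : K) ^ ((2 * (k + 1) + 3) * α) * (z : K) ^ ((2 * k + 3) * α)) ^ m := by
    rw [show 4 * (a * d + (k + 1) + 1) * (α * m) =
        d * (4 * a * (α * m)) + ((2 * (k + 1) + 3) * α + (2 * k + 3) * α) * m by ring,
      pow_add, pow_mul _ d, h.pow_eq_one, one_pow, one_mul, pow_mul, pow_add]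
  rw [summandAt, summandAt, weightAt_reflect h hd α m n r
    (show a * d + (k + 1) + (a * d + (l + 1)) + 2 = (2 * a + 1) * d by rw [← hb]; ring),
    add_assoc _ (k + 1) 1, add_assoc _ (l + 1) 1, ← h₁, ← h₂, ← add_assoc (a * d) (k + 1) 1,
    hper]
  simp only [Polynomial.C_mul, Polynomial.C_pow, Polynomial.C_neg]
  ring

lemma sum_summandAt_eq_zero [CharZero K] {z : Kˣ} {d : ℕ} (h : IsPrimitiveRoot (z : K) d)
    (hd : 1 < d) {α : ℕ} (m : ℕ) {n r : ℕ} (hα : α ≠ 0) (hr : r ≠ 0) (N : ℕ) :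
    ∑ k ∈ Finset.range (N * d), summandAt z α m n r k = 0 := by
  induction N with
  | zero => simp
  | succ a ih =>
    rw [Nat.succ_mul, Finset.sum_range_add, ih, zero_add]
    obtain ⟨D, rfl⟩ : ∃ D, d = D + 1 := ⟨d - 1, by omega⟩
    rw [Finset.sum_range_succ, summandAt_eq_zero (k := a * (D + 1) + D) h hd hr
      (Or.inr (Or.inl ⟨a + 1, by ring⟩)), add_zero, ← self_eq_neg]
    nth_rewrite 1 [← Finset.sum_range_reflect]
    rw [← Finset.sum_neg_distrib]
    refine Finset.sum_congr rfl fun b hb => ?_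
    rw [Finset.mem_range] at hb
    exact summandAt_reflect h hd m n hα hr a (by omega)

end Evaluation

lemma qint_dvd_of_eval₂_eq_zero {n : ℕ} (hn : n ≠ 0) {f : Polynomial ℤ}
    (hf : ∀ ζ : ℂ, ζ ^ n = 1 → ζ ≠ 1 → f.eval₂ (Int.castRingHom ℂ) ζ = 0) : qint n ∣ f := by
  have hX : (Polynomial.X - 1 : Polynomial ℤ) ≠ 0 := by
    simpa using Polynomial.X_sub_C_ne_zero (1 : ℤ)
  rw [← mul_dvd_mul_iff_right hX, qint, geom_sum_mul,
    ← Polynomial.map_dvd_map (Int.castRingHom ℂ) Int.cast_injective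
      (by simpa using Polynomial.monic_X_pow_sub_C (1 : ℤ) hn)]
  rw [Polynomial.map_sub, Polynomial.map_pow, Polynomial.map_X, Polynomial.map_one,
    Polynomial.X_pow_sub_one_eq_prod (Nat.pos_of_ne_zero hn) (Complex.isPrimitiveRoot_exp n hn)]
  refine Finset.prod_dvd_of_coprime
    (fun a _ b _ hab => Polynomial.pairwise_coprime_X_sub_C Function.injective_id hab) ?_
  intro ζ hζ
  rw [Polynomial.mem_nthRootsFinset (Nat.pos_of_ne_zero hn)] at hζ
  rw [Polynomial.dvd_iff_isRoot, Polynomial.IsRoot.def, Polynomial.map_mul, Polynomial.eval_mul,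
    Polynomial.eval_map]
  by_cases h1 : ζ = 1
  · simp [h1]
  · rw [hf ζ hζ h1, zero_mul]

lemma qintL_dvd_of_laurentEval_eq_zero {n : ℕ} (hn : n ≠ 0) {f : LaurentPolynomial ℤ}
    (hf : ∀ z : ℂˣ, (z : ℂ) ^ n = 1 → (z : ℂ) ≠ 1 → laurentEval z f = 0) : qintL n ∣ f := by
  obtain ⟨N, p, hp⟩ := f.exists_T_pow
  have hdvd : qint n ∣ p := by
    refine qint_dvd_of_eval₂_eq_zero hn fun ζ hζ h1 => ?_
    have hζ0 : ζ ≠ 0 := by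
      rintro rfl
      simp [hn] at hζ
    have := laurentEval_toLaurent (Units.mk0 ζ hζ0) p
    rw [hp, map_mul, hf _ hζ h1, zero_mul] at this
    exact this.symm
  rw [← (LaurentPolynomial.isUnit_T (N : ℤ)).dvd_mul_right, ← hp]
  exact map_dvd _ hdvd

/-- For all positive integers `α, m, n, r`,
`∑_{k=0}^{n-1} [k(k+2)]^r [2(k+1)] q^{(n-2-k)(2αm+1)} (w_k^{(α)}(x;q) w_{k+1}^{(α)}(x;q))^m
≡ 0 (mod [n])`. -/
theorem qint_dvd_sum_prod (α m n r : ℕ) (hα : 1 ≤ α) (hm : 1 ≤ m) (hn : 1 ≤ n) (hr : 1 ≤ r) :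
    (Polynomial.C (qintL n) : Polynomial (LaurentPolynomial ℤ)) ∣
      ∑ k ∈ Finset.range n,
        Polynomial.C ((qintL (k * (k + 2))) ^ r * qintL (2 * (k + 1)) *
            LaurentPolynomial.T (((n : ℤ) - 2 - k) * (2 * α * m + 1))) *
          (qw α k * qw α (k + 1)) ^ m := by
  rw [Polynomial.C_dvd_iff_dvd_coeff]
  intro i
  refine qintL_dvd_of_laurentEval_eq_zero (by omega) fun z hz h1 => ?_
  rw [← Polynomial.coeff_map, Polynomial.map_sum]
  have hprim : IsPrimitiveRoot (z : ℂ) (orderOf (z : ℂ)) := IsPrimitiveRoot.orderOf _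
  obtain ⟨N, hN⟩ := orderOf_dvd_of_pow_eq_one hz
  have hd : 1 < orderOf (z : ℂ) := by
    have h0 : orderOf (z : ℂ) ≠ 0 := fun h0 => by simp [h0] at hN; omega
    have h1' : orderOf (z : ℂ) ≠ 1 := fun h => h1 (orderOf_eq_one_iff.mp h)
    omega
  have hsum := sum_summandAt_eq_zero hprim hd m (n := n) (show α ≠ 0 by omega)
    (show r ≠ 0 by omega) N
  rw [mul_comm, ← hN] at hsum
  rw [← Polynomial.coeff_zero i, ← hsum]
  congr 1
  refine Finset.sum_congr rfl fun k _ => ?_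
  simp only [summandAt, weightAt, Polynomial.map_mul, Polynomial.map_pow, Polynomial.map_C,
    map_mul, map_pow, laurentEval_T]
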